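/- Let p be a prime and G a finite powerful p-group. Then for all i ≥ j ≥ 0 and k ≥ 1, the subgroup (Ω_i(G^{p^k}))^{p^j} has exponent dividing p^{i-j}, i.e., every element x of (Ω_i(G^{p^k}))^{p^j} satisfies x^{p^{i-j}} = 1. -/

import Mathlib

/-!
Since `Ω_i(G^{p^k}) ≤ Ω_i(G^p)`, it is enough that `Ω_i(G^p)` has exponent dividing `p^i` for every
`i`, and dividing out by `Ω_i(G^p)` reduces the step from `i` to `i + 1` to the case `i = 1`: the
elements of order `p` in `G^p` commute.

This is proved, in the stronger form that an element of order `p` in `G^{p^i}` commutes with every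
element of order dividing `p^i`, by induction on the order of `G` through two kinds of proper
sections. The subgroups `⟨b⟩G^p` are again powerful, and are proper unless `G` is cyclic; since
every element of `G^{p^i}` is a `p^i`-th power, they control how the elements of order `p` in
`G^{p^i}` act on `G^p`. The quotient by `Ω_1(G^p)` forces the relevant commutators to have order
`p`, and these lie one step deeper in the series `G^{p^i}`.
-/

/-- The subgroup generated by the `n`-th powers of the elements of `H`. -/
def subgroupPow {G : Type*} [Group G] (H : Subgroup G) (n : ℕ) : Subgroup G :=
  Subgroup.closure {x | ∃ h ∈ H, h ^ n = x}

/-- `Ω_i(H)`: the subgroup generated by the elements of `H` whose order divides `p ^ i`. -/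
def omegaSubgroup {G : Type*} [Group G] (p i : ℕ) (H : Subgroup G) : Subgroup G :=
  Subgroup.closure {x | x ∈ H ∧ x ^ p ^ i = 1}

/-- A finite `p`-group `G` is powerful if `[G,G] ≤ G^p` when `p` is odd,
and `[G,G] ≤ G^4` when `p = 2`. -/
def IsPowerful (p : ℕ) (G : Type*) [Group G] : Prop :=
  if p = 2 then commutator G ≤ subgroupPow (⊤ : Subgroup G) 4
  else commutator G ≤ subgroupPow (⊤ : Subgroup G) p

/-- The subgroup of `n`-th powers of the whole group is normal (indeed characteristic). -/
instance subgroupPow_top_normal {G : Type*} [Group G] (n : ℕ) :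
    (subgroupPow (⊤ : Subgroup G) n).Normal := by
  constructor
  intro x hx g
  have key : Subgroup.map (MulAut.conj g).toMonoidHom (subgroupPow (⊤ : Subgroup G) n)
      ≤ subgroupPow (⊤ : Subgroup G) n := by
    rw [subgroupPow, MonoidHom.map_closure]
    apply Subgroup.closure_le _ |>.mpr
    rintro y ⟨z, ⟨h, -, rfl⟩, rfl⟩
    exact Subgroup.subset_closure ⟨(MulAut.conj g) h, trivial, by
      simp [((MulAut.conj g).toMonoidHom.map_pow h n).symm]⟩
  have hmem : (MulAut.conj g) x ∈
      Subgroup.map (MulAut.conj g).toMonoidHom (subgroupPow (⊤ : Subgroup G) n) :=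
    Subgroup.mem_map_of_mem _ hx
  simpa [MulAut.conj_apply] using key hmem

/-- A powerfully central chain `{1} = H 0 ≤ H 1 ≤ ⋯ ≤ H n = G` of length `n`:
`[H (k+1), G] ≤ (H k)^p` for all `k < n`. -/
def IsPowerfullyCentralChain (p : ℕ) {G : Type*} [Group G] (n : ℕ) (H : ℕ → Subgroup G) : Prop :=
  H 0 = ⊥ ∧ H n = ⊤ ∧ (∀ k, k < n → H k ≤ H (k + 1)) ∧
    ∀ k, k < n → ⁅H (k + 1), (⊤ : Subgroup G)⁆ ≤ subgroupPow (H k) p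

/-- A group is powerfully nilpotent if it is powerful and admits a powerfully central chain. -/
def IsPowerfullyNilpotent (p : ℕ) (G : Type*) [Group G] : Prop :=
  IsPowerful p G ∧ ∃ (n : ℕ) (H : ℕ → Subgroup G), IsPowerfullyCentralChain p n H

/-- The powerful nilpotency class: the least possible length of a powerfully central chain. -/
noncomputable def powerfulNilpotencyClass (p : ℕ) (G : Type*) [Group G] : ℕ :=
  sInf {n | ∃ H : ℕ → Subgroup G, IsPowerfullyCentralChain p n H}

open Subgroup
open scoped commutatorElement

local notation "℧[" G "," n "]" => subgroupPow (⊤ : Subgroup G) n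

/-! ### Commutators -/

section Commutators

variable {G : Type*} [Group G]

theorem commutatorElement_pow_left_of_commute {a b : G} (h : Commute a ⁅a, b⁆) (n : ℕ) :
    ⁅a ^ n, b⁆ = ⁅a, b⁆ ^ n := by
  induction n with
  | zero => simp only [pow_zero, commutatorElement_one_left]
  | succ n ih =>
    rw [pow_succ', commutatorElement_mul_left_eq_conj_mul, ih, (h.pow_right n).eq,
      mul_inv_cancel_right, pow_succ]

theorem commutatorElement_pow_right_of_commute {a b : G} (h : Commute b ⁅a, b⁆) (n : ℕ) :
    ⁅a, b ^ n⁆ = ⁅a, b⁆ ^ n := by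
  have h' : Commute b ⁅b, a⁆ := commutatorElement_inv a b ▸ h.inv_right
  rw [← commutatorElement_inv, commutatorElement_pow_left_of_commute h', ← inv_pow,
    commutatorElement_inv]

theorem commute_pow_of_commutator_pow_eq_one {a b : G} {n : ℕ} (h : Commute a ⁅a, b⁆)
    (hn : ⁅a, b⁆ ^ n = 1) : Commute (a ^ n) b := by
  rw [← commutatorElement_eq_one_iff_commute, commutatorElement_pow_left_of_commute h, hn]

theorem commute_pow_pow_of_pow_mul_eq_one {a b : G} (ha : Commute a ⁅a, b⁆) (hb : Commute b ⁅a, b⁆)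
    {m n : ℕ} (hpow : a ^ (m * n) = 1) : Commute (a ^ m) (b ^ n) := by
  have hleft (k : ℕ) := commutatorElement_pow_left_of_commute ha k
  have hbm : Commute b ⁅a ^ m, b⁆ := hleft m ▸ hb.pow_right m
  rw [← commutatorElement_eq_one_iff_commute, commutatorElement_pow_right_of_commute hbm, hleft,
    ← pow_mul, ← hleft, hpow, commutatorElement_one_left]

theorem commute_pow_of_commutator_mul_pow_eq {a y : G} {n : ℕ} (h : (⁅y, a⁆ * a) ^ n = a ^ n) :
    Commute (a ^ n) y := by
  rw [← conj_eq_commutatorElement_mul, MulAut.conj_apply, conj_pow] at h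
  exact (mul_inv_eq_iff_eq_mul.1 h).symm

theorem mul_pow_of_commute_commutator {x y : G} (hx : Commute ⁅y, x⁆ x) (hy : Commute ⁅y, x⁆ y)
    (n : ℕ) : (x * y) ^ n = x ^ n * y ^ n * ⁅y, x⁆ ^ n.choose 2 := by
  have hswap (n : ℕ) : y ^ n * x = ⁅y, x⁆ ^ n * (x * y ^ n) := by
    rw [← commutatorElement_pow_left_of_commute hy.symm, commutatorElement_def]
    group
  induction n with
  | zero => simp only [pow_zero, Nat.choose_zero_succ, mul_one]
  | succ n ih =>
    have hxy : Commute (⁅y, x⁆ ^ n.choose 2) (x * y) := (hx.mul_right hy).pow_left _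
    have hxyn : Commute (⁅y, x⁆ ^ n) (x * y ^ n * y) :=
      ((hx.mul_right (hy.pow_right n)).mul_right hy).pow_left n
    calc (x * y) ^ (n + 1) = x ^ n * (y ^ n * x) * y * ⁅y, x⁆ ^ n.choose 2 := by
          rw [pow_succ, ih, mul_assoc, hxy.eq]; simp only [mul_assoc]
      _ = x ^ n * (⁅y, x⁆ ^ n * (x * y ^ n * y)) * ⁅y, x⁆ ^ n.choose 2 := by
          rw [hswap]; simp only [mul_assoc]
      _ = x ^ (n + 1) * y ^ (n + 1) * ⁅y, x⁆ ^ (n + 1).choose 2 := by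
          rw [hxyn.eq, Nat.choose_succ_succ' n 1, Nat.choose_one_right, pow_add ⁅y, x⁆, pow_succ x,
            pow_succ y]
          simp only [mul_assoc]

theorem mul_pow_prime_of_commute_commutator {p : ℕ} [Fact p.Prime] (hp2 : p ≠ 2) {x y : G}
    (hx : Commute ⁅y, x⁆ x) (hy : Commute ⁅y, x⁆ y) (hp : ⁅y, x⁆ ^ p = 1) :
    (x * y) ^ p = x ^ p * y ^ p := by
  have hprime := Fact.out (p := p.Prime)
  obtain ⟨m, hm⟩ := hprime.dvd_choose_self two_ne_zero (hprime.two_le.lt_of_ne' hp2)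
  rw [mul_pow_of_commute_commutator hx hy, hm, pow_mul, hp, one_pow, mul_one]

theorem commutator_le_iff_le_comap_centralizer {A B M : Subgroup G} [M.Normal] :
    ⁅A, B⁆ ≤ M ↔ A ≤ (centralizer (B.map (QuotientGroup.mk' M))).comap (QuotientGroup.mk' M) := by
  rw [← map_le_iff_le_comap, ← commutator_eq_bot_iff_le_centralizer, ← map_commutator,
    Subgroup.map_eq_bot_iff, QuotientGroup.ker_mk']

theorem commutator_sup_left_le {A B C M : Subgroup G} [M.Normal] (hA : ⁅A, C⁆ ≤ M)
    (hB : ⁅B, C⁆ ≤ M) : ⁅A ⊔ B, C⁆ ≤ M := by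
  rw [commutator_le_iff_le_comap_centralizer] at *
  exact sup_le hA hB

theorem commutator_sup_self_le (A N : Subgroup G) [IsMulCommutative A] [N.Normal] :
    ⁅A ⊔ N, A ⊔ N⁆ ≤ ⁅N, (⊤ : Subgroup G)⁆ := by
  have hN (B : Subgroup G) : ⁅N, B⁆ ≤ ⁅N, (⊤ : Subgroup G)⁆ := commutator_mono le_rfl le_top
  have hA : ⁅A, A⁆ = ⊥ := commutator_self_eq_bot_iff.2 ‹_›
  refine commutator_sup_left_le ?_ (hN _)
  rw [commutator_comm]
  exact commutator_sup_left_le (hA.trans_le bot_le) (hN A)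

theorem le_of_le_sup_commutator_top [Group.IsNilpotent G] {A M : Subgroup G} [M.Normal]
    (h : A ≤ M ⊔ ⁅A, (⊤ : Subgroup G)⁆) : A ≤ M := by
  obtain ⟨n, hn⟩ := Subgroup.nilpotent_iff_lowerCentralSeries.1 ‹Group.IsNilpotent G›
  suffices key : ∀ n, A ≤ M ⊔ (⊤ : Subgroup G).lowerCentralSeries n by
    simpa only [hn, sup_bot_eq] using key n
  intro n
  induction n with
  | zero => exact le_top.trans le_sup_right
  | succ n ih =>
    refine h.trans (sup_le le_sup_left ((commutator_mono ih le_rfl).trans ?_))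
    exact commutator_sup_left_le ((commutator_le_left M ⊤).trans le_sup_left) le_sup_right

theorem pow_eq_one_of_mem_closure {s : Set G} {n : ℕ} (hcomm : ∀ x ∈ s, ∀ y ∈ s, Commute x y)
    (hpow : ∀ x ∈ s, x ^ n = 1) {x : G} (hx : x ∈ closure s) : x ^ n = 1 := by
  have := isMulCommutative_closure (k := s) hcomm
  induction hx using closure_induction with
  | mem x hx => exact hpow x hx
  | one => exact one_pow n
  | mul x y hx hy ihx ihy =>
    have hxy : Commute x y := setLike_mul_comm hx hy
    rw [hxy.mul_pow, ihx, ihy, one_mul]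
  | inv x _ ih => rw [inv_pow, ih, inv_one]

end Commutators

/-! ### Subgroups generated by powers -/

section Powers

variable {G G' : Type*} [Group G] [Group G']

theorem closure_normal_of_conj_mem {s : Set G} (h : ∀ x ∈ s, ∀ g, g * x * g⁻¹ ∈ s) :
    (closure s).Normal where
  conj_mem x hx g := by
    have hle : (closure s).map (MulAut.conj g).toMonoidHom ≤ closure s := by
      rw [MonoidHom.map_closure, closure_le]
      rintro _ ⟨y, hy, rfl⟩
      exact subset_closure (h y hy g)
    exact hle (mem_map_of_mem _ hx)

instance subgroupPow_normal (H : Subgroup G) [hH : H.Normal] (n : ℕ) :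
    (subgroupPow H n).Normal :=
  closure_normal_of_conj_mem fun _ ⟨y, hy, hyx⟩ g =>
    ⟨g * y * g⁻¹, hH.conj_mem y hy g, by rw [conj_pow, hyx]⟩

instance omegaSubgroup_normal (p i : ℕ) (H : Subgroup G) [hH : H.Normal] :
    (omegaSubgroup p i H).Normal :=
  closure_normal_of_conj_mem fun x ⟨hx, hxp⟩ g =>
    ⟨hH.conj_mem x hx g, by rw [conj_pow, hxp, mul_one, mul_inv_cancel]⟩

theorem omegaSubgroup_le (p i : ℕ) (H : Subgroup G) : omegaSubgroup p i H ≤ H :=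
  (closure_le H).2 fun _ hx => hx.1

theorem omegaSubgroup_mono (p i : ℕ) {H K : Subgroup G} (h : H ≤ K) :
    omegaSubgroup p i H ≤ omegaSubgroup p i K :=
  closure_mono fun _ hx => ⟨h hx.1, hx.2⟩

theorem pow_mem_subgroupPow {H : Subgroup G} {x : G} (hx : x ∈ H) (n : ℕ) :
    x ^ n ∈ subgroupPow H n :=
  subset_closure ⟨x, hx, rfl⟩

theorem subgroupPow_le {H K : Subgroup G} {n : ℕ} :
    subgroupPow H n ≤ K ↔ ∀ x ∈ H, x ^ n ∈ K := by
  rw [subgroupPow, closure_le]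
  exact ⟨fun h x hx => h ⟨x, hx, rfl⟩, fun h _ ⟨x, hx, hxn⟩ => hxn ▸ h x hx⟩

theorem subgroupPow_mono {H K : Subgroup G} (h : H ≤ K) (n : ℕ) :
    subgroupPow H n ≤ subgroupPow K n :=
  subgroupPow_le.2 fun _ hx => pow_mem_subgroupPow (h hx) n

theorem subgroupPow_le_of_dvd (H : Subgroup G) {m n : ℕ} (h : m ∣ n) :
    subgroupPow H n ≤ subgroupPow H m := by
  obtain ⟨k, rfl⟩ := h
  refine subgroupPow_le.2 fun x hx => ?_
  rw [pow_mul]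
  exact pow_mem (pow_mem_subgroupPow hx m) k

theorem pow_mem_subgroupPow_of_le (p : ℕ) (x : G) {k m : ℕ} (h : k ≤ m) :
    x ^ p ^ m ∈ ℧[G,p ^ k] :=
  subgroupPow_le_of_dvd ⊤ (pow_dvd_pow p h) (pow_mem_subgroupPow (mem_top x) _)

theorem subgroupPow_le_subgroupPow_prime (p : ℕ) {k : ℕ} (hk : k ≠ 0) :
    ℧[G,p ^ k] ≤ ℧[G,p] :=
  subgroupPow_le_of_dvd ⊤ (dvd_pow_self p hk)

theorem map_subgroupPow (f : G →* G') (H : Subgroup G) (n : ℕ) :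
    (subgroupPow H n).map f = subgroupPow (H.map f) n := by
  apply le_antisymm
  · rw [map_le_iff_le_comap, subgroupPow_le]
    intro x hx
    rw [mem_comap, map_pow]
    exact pow_mem_subgroupPow (mem_map_of_mem f hx) n
  · rw [subgroupPow_le]
    rintro _ ⟨x, hx, rfl⟩
    rw [← map_pow]
    exact mem_map_of_mem f (pow_mem_subgroupPow hx n)

theorem map_mk'_subgroupPow_top (N : Subgroup G) [N.Normal] (n : ℕ) :
    ℧[G,n].map (QuotientGroup.mk' N) = ℧[G ⧸ N,n] := by
  rw [map_subgroupPow, map_top_of_surjective _ (QuotientGroup.mk'_surjective N)]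

theorem map_subtype_subgroupPow_top (H : Subgroup G) (n : ℕ) :
    ℧[H,n].map H.subtype = subgroupPow H n := by
  rw [map_subgroupPow, ← MonoidHom.range_eq_map, range_subtype]

theorem exists_pow_eq_of_mul_pow {n : ℕ} (h : ∀ x y : G, (x * y) ^ n = x ^ n * y ^ n) {z : G}
    (hz : z ∈ ℧[G,n]) : ∃ x, x ^ n = z := by
  have hle : ℧[G,n] ≤ (MonoidHom.mk' (· ^ n) h).range := subgroupPow_le.2 fun x _ => ⟨x, rfl⟩
  exact hle hz

end Powers

section Omega

variable {p : ℕ} {G : Type*} [Group G]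

theorem omegaSubgroup_zero (p : ℕ) (H : Subgroup G) : omegaSubgroup p 0 H = ⊥ :=
  closure_eq_bot_iff.2 fun x hx => by
    rw [← pow_one x]
    exact hx.2

theorem pow_eq_one_of_mem_omegaSubgroup_one_of_commute {H : Subgroup G}
    (hcomm : ∀ x ∈ H, ∀ y ∈ H, x ^ p = 1 → y ^ p = 1 → Commute x y) {x : G}
    (hx : x ∈ omegaSubgroup p 1 H) : x ^ p = 1 := by
  rw [omegaSubgroup, pow_one] at hx
  exact pow_eq_one_of_mem_closure (fun x hx y hy => hcomm x hx.1 y hy.1 hx.2 hy.2)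
    (fun x hx => hx.2) hx

theorem mem_omegaSubgroup_one {H : Subgroup G} {x : G} (hx : x ∈ H) (hxp : x ^ p = 1) :
    x ∈ omegaSubgroup p 1 H :=
  subset_closure ⟨hx, by rwa [pow_one]⟩

theorem omegaSubgroup_one_ne_bot [Fact p.Prime] {H : Subgroup G} [Finite H] (hH : IsPGroup p H)
    (hne : H ≠ ⊥) : omegaSubgroup p 1 H ≠ ⊥ := by
  intro hbot
  have hdvd := hH.card_eq_or_dvd.resolve_left (mt (eq_bot_of_card_eq H) hne)
  obtain ⟨x, hx⟩ := exists_prime_orderOf_dvd_card' p hdvd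
  have hxp : (x : G) ^ p = 1 := congrArg Subtype.val (orderOf_dvd_iff_pow_eq_one.1 hx.dvd)
  have hx1 : (x : G) = 1 := mem_bot.1 (hbot ▸ mem_omegaSubgroup_one x.2 hxp)
  rw [← orderOf_coe, hx1, orderOf_one] at hx
  exact (Fact.out (p := p.Prime)).ne_one hx.symm

end Omega

theorem card_lt_card_of_ne_top {G : Type*} [Group G] [Finite G] {H : Subgroup G} (h : H ≠ ⊤) :
    Nat.card H < Nat.card G :=
  not_le.1 (mt (eq_top_of_le_card H) h)

/-! ### Generation modulo `p`-th powers -/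

section Frattini

variable {p : ℕ} [Fact p.Prime] {G : Type*} [Group G] [Finite G]

theorem pow_mem_of_isCoatom (hG : IsPGroup p G) {M : Subgroup G} (hM : IsCoatom M) (x : G) :
    x ^ p ∈ M := by
  have := hG.isNilpotent
  have : M.Normal := Group.normalizerCondition_of_isNilpotent.normal_of_coatom M hM
  by_contra hxM
  have htop : zpowers (x ^ p) ⊔ M = ⊤ :=
    hM.2 _ (right_lt_sup.2 fun hle => hxM (hle (mem_zpowers _)))
  have hgen : QuotientGroup.mk' M x ∈ zpowers (QuotientGroup.mk' M x ^ p) := by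
    rw [← map_pow, ← MonoidHom.map_zpowers]
    have hmem : QuotientGroup.mk' M x ∈ (zpowers (x ^ p) ⊔ M).map (QuotientGroup.mk' M) :=
      htop ▸ mem_map_of_mem _ (mem_top x)
    rwa [Subgroup.map_sup, QuotientGroup.map_mk'_self, sup_bot_eq] at hmem
  have hone : QuotientGroup.mk' M x = 1 := by
    by_contra hne
    have hdvd := (hG.to_quotient M).dvd_orderOf hne
    rw [mem_zpowers_pow_iff, Nat.gcd_eq_left hdvd] at hgen
    exact (Fact.out (p := p.Prime)).ne_one hgen
  exact hxM (pow_mem ((QuotientGroup.eq_one_iff x).1 hone) p)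

theorem eq_top_of_sup_subgroupPow_eq_top (hG : IsPGroup p G) {H : Subgroup G}
    (h : H ⊔ ℧[G,p] = ⊤) : H = ⊤ := by
  refine (eq_top_or_exists_le_coatom H).resolve_right ?_
  rintro ⟨M, hM, hHM⟩
  refine hM.1 (top_le_iff.1 (h ▸ sup_le hHM ?_))
  exact subgroupPow_le.2 fun x _ => pow_mem_of_isCoatom hG hM x

theorem commute_of_zpowers_sup_subgroupPow_eq_top (hG : IsPGroup p G) {x : G}
    (h : zpowers x ⊔ ℧[G,p] = ⊤) (a b : G) : Commute a b := by
  have hx := eq_top_of_sup_subgroupPow_eq_top hG h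
  exact setLike_mul_comm (s := zpowers x) (hx ▸ mem_top a) (hx ▸ mem_top b)

end Frattini

/-! ### Powerfully embedded subgroups -/

/-- The exponent `e` for which `G` is powerful if and only if `[G, G] ≤ G^{p^e}`. -/
def powerfulDepth (p : ℕ) : ℕ := if p = 2 then 2 else 1

theorem powerfulDepth_of_ne_two {p : ℕ} (hp2 : p ≠ 2) : powerfulDepth p = 1 := if_neg hp2

theorem powerfulDepth_ne_zero (p : ℕ) : powerfulDepth p ≠ 0 := by
  unfold powerfulDepth
  split_ifs <;> decide

/-- A subgroup `N` is powerfully embedded in `G` if `[N, G] ≤ N^p`, or `[N, G] ≤ N^4` if `p = 2`.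
Powerfully embedded subgroups remain so on taking `p`-th powers, which carries the induction along
the series `G^{p^k}`. -/
def IsPowerfullyEmbedded (p : ℕ) {G : Type*} [Group G] (N : Subgroup G) : Prop :=
  ⁅N, (⊤ : Subgroup G)⁆ ≤ subgroupPow N (p ^ powerfulDepth p)

theorem isPowerful_iff_isPowerfullyEmbedded_top {p : ℕ} {G : Type*} [Group G] :
    IsPowerful p G ↔ IsPowerfullyEmbedded p (⊤ : Subgroup G) := by
  unfold IsPowerful IsPowerfullyEmbedded powerfulDepth
  split_ifs with hp2
  · subst hp2; rfl
  · rw [pow_one]; rfl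

section PowerfullyEmbedded

variable {p : ℕ} {G : Type*} [Group G]

theorem pow_eq_one_of_subgroupPow_eq_bot {H : Subgroup G} {n : ℕ} (h : subgroupPow H n = ⊥) {x : G}
    (hx : x ∈ H) : x ^ n = 1 :=
  mem_bot.1 (h ▸ pow_mem_subgroupPow hx n)

theorem commutator_subgroupPow_eq_bot_of_ne_two [Fact p.Prime] (hp2 : p ≠ 2) {N : Subgroup G}
    [N.Normal] (hN : ⁅N, (⊤ : Subgroup G)⁆ ≤ subgroupPow N p)
    (hexp : subgroupPow (subgroupPow N p) p = ⊥)
    (hcen : ⁅⁅subgroupPow N p, (⊤ : Subgroup G)⁆, (⊤ : Subgroup G)⁆ = ⊥) :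
    ⁅subgroupPow N p, (⊤ : Subgroup G)⁆ = ⊥ := by
  rw [commutator_top_right_eq_bot_iff_le_center] at hcen ⊢
  refine subgroupPow_le.2 fun x hx => mem_center_iff.2 fun g => ?_
  have hc : ⁅g, x⁆ ∈ subgroupPow N p :=
    hN (commutator_comm N ⊤ ▸ commutator_mem_commutator (mem_top g) hx)
  have hd : ⁅x, ⁅g, x⁆⁆ ∈ ⁅subgroupPow N p, (⊤ : Subgroup G)⁆ :=
    commutator_comm ⊤ (subgroupPow N p) ▸ commutator_mem_commutator (mem_top x) hc
  have hdcomm (z : G) : Commute ⁅x, ⁅g, x⁆⁆ z := (mem_center_iff.1 (hcen hd) z).symm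
  have hdp : ⁅x, ⁅g, x⁆⁆ ^ p = 1 :=
    pow_eq_one_of_subgroupPow_eq_bot hexp (commutator_le_left _ ⊤ hd)
  refine (commute_pow_of_commutator_mul_pow_eq ?_).symm.eq
  rw [mul_pow_prime_of_commute_commutator hp2 (hdcomm _) (hdcomm _) hdp,
    pow_eq_one_of_subgroupPow_eq_bot hexp hc, one_mul]

theorem commutator_subgroupPow_two_eq_bot {N : Subgroup G}
    (hN : ⁅N, (⊤ : Subgroup G)⁆ ≤ subgroupPow N 4) (hexp : subgroupPow (subgroupPow N 2) 4 = ⊥)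
    (hcen : ⁅⁅subgroupPow N 2, (⊤ : Subgroup G)⁆, (⊤ : Subgroup G)⁆ = ⊥) :
    ⁅subgroupPow N 2, (⊤ : Subgroup G)⁆ = ⊥ := by
  rw [commutator_top_right_eq_bot_iff_le_center] at hcen ⊢
  have hsq {x : G} (hx : x ∈ N) (g h : G) : Commute h ⁅x ^ 2, g⁆ :=
    mem_center_iff.1 (hcen (commutator_mem_commutator (pow_mem_subgroupPow hx 2) (mem_top g))) h
  have hN' {x : G} (hx : x ∈ N) (g : G) : ⁅x, g⁆ ∈ subgroupPow N 4 :=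
    hN (commutator_mem_commutator hx (mem_top g))
  have hfour (x : G) : x ^ 4 = (x ^ 2) ^ 2 := pow_mul x 2 2
  have hexp4 {z : G} (hz : z ∈ subgroupPow N 4) : z ^ 2 = 1 := by
    refine pow_eq_one_of_mem_closure ?_ ?_ hz
    · rintro _ ⟨x, hx, rfl⟩ _ ⟨y, -, rfl⟩
      rw [hfour, hfour]
      exact commute_pow_pow_of_pow_mul_eq_one (hsq hx _ _) (hsq hx _ _)
        (pow_eq_one_of_subgroupPow_eq_bot hexp (pow_mem_subgroupPow hx 2))
    · rintro _ ⟨x, hx, rfl⟩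
      rw [← pow_mul, mul_comm, pow_mul]
      exact pow_eq_one_of_subgroupPow_eq_bot hexp (pow_mem_subgroupPow hx 2)
  have hcen4 : subgroupPow N 4 ≤ center G := by
    refine subgroupPow_le.2 fun x hx => mem_center_iff.2 fun g => ?_
    rw [hfour]
    exact (commute_pow_of_commutator_pow_eq_one (hsq hx g _)
      (hexp4 (hN' (pow_mem hx 2) g))).symm.eq
  refine subgroupPow_le.2 fun x hx => mem_center_iff.2 fun g => ?_
  exact (commute_pow_of_commutator_pow_eq_one (mem_center_iff.1 (hcen4 (hN' hx g)) x)
    (hexp4 (hN' hx g))).symm.eq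

theorem IsPowerfullyEmbedded.map_mk' {N : Subgroup G} (h : IsPowerfullyEmbedded p N)
    (R : Subgroup G) [R.Normal] : IsPowerfullyEmbedded p (N.map (QuotientGroup.mk' R)) := by
  unfold IsPowerfullyEmbedded
  rw [← map_top_of_surjective _ (QuotientGroup.mk'_surjective R), ← map_commutator,
    ← map_subgroupPow]
  exact map_mono h

variable [Fact p.Prime]

theorem IsPowerfullyEmbedded.commutator_subgroupPow_eq_bot {N : Subgroup G} [N.Normal]
    (hN : IsPowerfullyEmbedded p N)
    (hexp : subgroupPow (subgroupPow N p) (p ^ powerfulDepth p) = ⊥)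
    (hcen : ⁅⁅subgroupPow N p, (⊤ : Subgroup G)⁆, (⊤ : Subgroup G)⁆ = ⊥) :
    ⁅subgroupPow N p, (⊤ : Subgroup G)⁆ = ⊥ := by
  unfold IsPowerfullyEmbedded at hN
  obtain rfl | hp2 := eq_or_ne p 2
  · exact commutator_subgroupPow_two_eq_bot hN hexp hcen
  · rw [powerfulDepth_of_ne_two hp2, pow_one] at hN hexp
    exact commutator_subgroupPow_eq_bot_of_ne_two hp2 hN hexp hcen

theorem IsPowerfullyEmbedded.subgroupPow_prime [Group.IsNilpotent G] {N : Subgroup G}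
    [hNn : N.Normal] (hN : IsPowerfullyEmbedded p N) :
    IsPowerfullyEmbedded p (subgroupPow N p) := by
  let H := subgroupPow N p
  let R := subgroupPow H (p ^ powerfulDepth p) ⊔ ⁅⁅H, (⊤ : Subgroup G)⁆, (⊤ : Subgroup G)⁆
  -- By nilpotency it suffices to argue modulo `[[N^p, G], G]`.
  refine le_of_le_sup_commutator_top (?_ : ⁅H, (⊤ : Subgroup G)⁆ ≤ R)
  have hR {K : Subgroup G} (hK : K ≤ R) : K.map (QuotientGroup.mk' R) = ⊥ := by
    rwa [Subgroup.map_eq_bot_iff, QuotientGroup.ker_mk']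
  have htop := map_top_of_surjective _ (QuotientGroup.mk'_surjective R)
  have : (N.map (QuotientGroup.mk' R)).Normal := hNn.map _ (QuotientGroup.mk'_surjective R)
  have hbot := (hN.map_mk' R).commutator_subgroupPow_eq_bot
    (by rw [← map_subgroupPow, ← map_subgroupPow]; exact hR le_sup_left)
    (by rw [← map_subgroupPow, ← htop, ← map_commutator, ← map_commutator]; exact hR le_sup_right)
  rwa [← map_subgroupPow, ← htop, ← map_commutator, Subgroup.map_eq_bot_iff,
    QuotientGroup.ker_mk'] at hbot

end PowerfullyEmbedded

/-! ### Powerful `p`-groups -/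

/-- A powerful `p`-group. Bundling the two conditions lets them pass together to the sections of `G`
in inductions on the order. -/
structure IsPowerfulPGroup (p : ℕ) (G : Type*) [Group G] : Prop where
  isPGroup : IsPGroup p G
  isPowerful : IsPowerful p G

namespace IsPowerfulPGroup

section Sections

variable {p : ℕ} {G : Type*} [Group G]

theorem quotient (hG : IsPowerfulPGroup p G) (N : Subgroup G) [N.Normal] :
    IsPowerfulPGroup p (G ⧸ N) where
  isPGroup := hG.isPGroup.to_quotient N
  isPowerful := by
    have h := (isPowerful_iff_isPowerfullyEmbedded_top.1 hG.isPowerful).map_mk' N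
    rwa [map_top_of_surjective _ (QuotientGroup.mk'_surjective N),
      ← isPowerful_iff_isPowerfullyEmbedded_top] at h

theorem subgroup (hG : IsPowerfulPGroup p G) {H : Subgroup G}
    (hH : ⁅H, H⁆ ≤ subgroupPow H (p ^ powerfulDepth p)) : IsPowerfulPGroup p H where
  isPGroup := hG.isPGroup.to_subgroup H
  isPowerful := by
    rw [isPowerful_iff_isPowerfullyEmbedded_top]
    unfold IsPowerfullyEmbedded
    rwa [← map_subtype_le_map_subtype, map_commutator, map_subtype_subgroupPow_top,
      ← MonoidHom.range_eq_map, range_subtype]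

theorem isPowerfullyEmbedded_top (hG : IsPowerfulPGroup p G) :
    IsPowerfullyEmbedded p (⊤ : Subgroup G) :=
  isPowerful_iff_isPowerfullyEmbedded_top.1 hG.isPowerful

theorem commutatorElement_mem (hG : IsPowerfulPGroup p G) (x y : G) :
    ⁅x, y⁆ ∈ ℧[G,p ^ powerfulDepth p] :=
  hG.isPowerfullyEmbedded_top (commutator_mem_commutator (mem_top x) (mem_top y))

theorem commutatorElement_mem_subgroupPow_prime (hG : IsPowerfulPGroup p G) (x y : G) :
    ⁅x, y⁆ ∈ ℧[G,p] :=
  subgroupPow_le_subgroupPow_prime p (powerfulDepth_ne_zero p) (hG.commutatorElement_mem x y)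

end Sections

section Powers

variable {p : ℕ} [Fact p.Prime] {G : Type*} [Group G]

theorem mul_pow_of_subgroupPow_le_center (hG : IsPowerfulPGroup p G)
    (hexp : subgroupPow ℧[G,p] p = ⊥) (hcen : ℧[G,p] ≤ center G) (x y : G) :
    (x * y) ^ p = x ^ p * y ^ p := by
  have hd := hG.commutatorElement_mem y x
  obtain rfl | hp2 := eq_or_ne p 2
  · have hbot : ℧[G,2 ^ 2] ≤ ⊥ := hexp ▸ subgroupPow_le.2 fun z _ => by
      rw [pow_two, pow_mul]
      exact pow_mem_subgroupPow (pow_mem_subgroupPow (mem_top z) 2) 2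
    exact (commutatorElement_eq_one_iff_commute.1 (hbot hd)).symm.mul_pow 2
  · rw [powerfulDepth_of_ne_two hp2, pow_one] at hd
    have hcomm (z : G) : Commute ⁅y, x⁆ z := (mem_center_iff.1 (hcen hd) z).symm
    exact mul_pow_prime_of_commute_commutator hp2 (hcomm x) (hcomm y)
      (pow_eq_one_of_subgroupPow_eq_bot hexp hd)

variable [Finite G]

theorem zpowers_sup (hG : IsPowerfulPGroup p G) (x : G) :
    IsPowerfulPGroup p ↥(zpowers x ⊔ ℧[G,p]) := by
  have := hG.isPGroup.isNilpotent
  have hle := hG.isPowerfullyEmbedded_top.subgroupPow_prime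
  exact hG.subgroup ((commutator_sup_self_le (zpowers x) _).trans
    (hle.trans (subgroupPow_mono le_sup_right _)))

theorem exists_pow_mul_eq (hG : IsPowerfulPGroup p G) {z : G} (hz : z ∈ ℧[G,p]) :
    ∃ x, ∃ w ∈ subgroupPow ℧[G,p] p, x ^ p * w = z := by
  have := hG.isPGroup.isNilpotent
  let M := subgroupPow ℧[G,p] p
  have hcomm : ⁅℧[G,p], (⊤ : Subgroup G)⁆ ≤ M :=
    hG.isPowerfullyEmbedded_top.subgroupPow_prime.trans
      (subgroupPow_le_of_dvd _ (dvd_pow_self p (powerfulDepth_ne_zero p)))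
  have hM {K : Subgroup G} (hK : K ≤ M) : K.map (QuotientGroup.mk' M) = ⊥ := by
    rwa [Subgroup.map_eq_bot_iff, QuotientGroup.ker_mk']
  have hmul := (hG.quotient M).mul_pow_of_subgroupPow_le_center
    (by rw [← map_mk'_subgroupPow_top, ← map_subgroupPow]; exact hM le_rfl)
    (by
      rw [← commutator_top_right_eq_bot_iff_le_center, ← map_mk'_subgroupPow_top,
        ← map_top_of_surjective _ (QuotientGroup.mk'_surjective M), ← map_commutator]
      exact hM hcomm)
  obtain ⟨x, hx⟩ := exists_pow_eq_of_mul_pow hmul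
    (map_mk'_subgroupPow_top M p ▸ mem_map_of_mem (QuotientGroup.mk' M) hz)
  obtain ⟨x, rfl⟩ := QuotientGroup.mk'_surjective M x
  exact ⟨x, (x ^ p)⁻¹ * z, QuotientGroup.eq.1 hx, mul_inv_cancel_left _ _⟩

theorem exists_pow_prime_eq (hG : IsPowerfulPGroup p G) {z : G} (hz : z ∈ ℧[G,p]) :
    ∃ x, x ^ p = z := by
  induction hn : Nat.card G using Nat.strong_induction_on generalizing G with
  | _ n ih =>
  obtain ⟨x, w, hw, rfl⟩ := hG.exists_pow_mul_eq hz
  let T := zpowers x ⊔ ℧[G,p]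
  by_cases hT : T = ⊤
  · have hcomm := commute_of_zpowers_sup_subgroupPow_eq_top hG.isPGroup hT
    exact exists_pow_eq_of_mul_pow (fun a b => (hcomm a b).mul_pow p) hz
  · have hmem : x ^ p * w ∈ subgroupPow T p :=
      mul_mem (pow_mem_subgroupPow (mem_sup_left (mem_zpowers x)) p)
        (subgroupPow_mono le_sup_right p hw)
    rw [← map_subtype_subgroupPow_top] at hmem
    obtain ⟨v, hv, hvz⟩ := hmem
    obtain ⟨y, rfl⟩ := ih _ (hn ▸ card_lt_card_of_ne_top hT) (hG.zpowers_sup x) hv rfl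
    exact ⟨y, hvz⟩

theorem isPowerfullyEmbedded_and_exists_pow_eq (hG : IsPowerfulPGroup p G) (k : ℕ) :
    IsPowerfullyEmbedded p ℧[G,p ^ k] ∧ ∀ z ∈ ℧[G,p ^ k], ∃ x, x ^ p ^ k = z := by
  have := hG.isPGroup.isNilpotent
  induction k with
  | zero =>
    have htop : ℧[G,p ^ 0] = ⊤ :=
      top_le_iff.1 fun x _ => pow_one x ▸ pow_mem_subgroupPow (mem_top x) 1
    rw [htop]
    exact ⟨hG.isPowerfullyEmbedded_top, fun z _ => ⟨z, pow_one z⟩⟩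
  | succ k ih =>
    obtain ⟨hemb, hroot⟩ := ih
    have hsucc : ℧[G,p ^ (k + 1)] = subgroupPow ℧[G,p ^ k] p := by
      refine le_antisymm (subgroupPow_le.2 fun x _ => ?_) (subgroupPow_le.2 fun x hx => ?_)
      · rw [pow_succ, pow_mul]
        exact pow_mem_subgroupPow (pow_mem_subgroupPow (mem_top x) _) _
      · obtain ⟨y, rfl⟩ := hroot x hx
        rw [← pow_mul, ← pow_succ]
        exact pow_mem_subgroupPow (mem_top y) _
    rw [hsucc]
    refine ⟨hemb.subgroupPow_prime, fun z hz => ?_⟩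
    rw [← map_subtype_subgroupPow_top] at hz
    obtain ⟨v, hv, rfl⟩ := hz
    obtain ⟨y, rfl⟩ :=
      (hG.subgroup ((commutator_mono le_rfl le_top).trans hemb)).exists_pow_prime_eq hv
    obtain ⟨x, hx⟩ := hroot y y.2
    exact ⟨x, by rw [pow_succ, pow_mul, hx]; rfl⟩

theorem exists_pow_eq (hG : IsPowerfulPGroup p G) {k : ℕ} {z : G} (hz : z ∈ ℧[G,p ^ k]) :
    ∃ x, x ^ p ^ k = z :=
  (hG.isPowerfullyEmbedded_and_exists_pow_eq k).2 z hz

theorem commutatorElement_mem_add_powerfulDepth (hG : IsPowerfulPGroup p G) {k : ℕ} {z : G}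
    (hz : z ∈ ℧[G,p ^ k]) (g : G) : ⁅z, g⁆ ∈ ℧[G,p ^ (k + powerfulDepth p)] := by
  obtain ⟨hemb, hroot⟩ := hG.isPowerfullyEmbedded_and_exists_pow_eq k
  refine subgroupPow_le.2 (fun x hx => ?_) (hemb (commutator_mem_commutator hz (mem_top g)))
  obtain ⟨y, rfl⟩ := hroot x hx
  rw [← pow_mul, ← pow_add]
  exact pow_mem_subgroupPow (mem_top y) _

theorem commutatorElement_mem_succ (hG : IsPowerfulPGroup p G) {k : ℕ} {z : G}
    (hz : z ∈ ℧[G,p ^ k]) (g : G) : ⁅z, g⁆ ∈ ℧[G,p ^ (k + 1)] :=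
  have hdepth : k + 1 ≤ k + powerfulDepth p :=
    Nat.add_le_add_left (Nat.one_le_iff_ne_zero.2 (powerfulDepth_ne_zero p)) k
  subgroupPow_le_of_dvd ⊤ (pow_dvd_pow p hdepth) (hG.commutatorElement_mem_add_powerfulDepth hz g)

theorem eq_one_of_forall_mem (hG : IsPowerfulPGroup p G) {z : G}
    (hz : ∀ n, z ∈ ℧[G,p ^ n]) : z = 1 := by
  obtain ⟨n, hn⟩ := IsPGroup.iff_card.1 hG.isPGroup
  obtain ⟨x, rfl⟩ := hG.exists_pow_eq (hz n)
  rw [← hn, pow_card_eq_one']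

end Powers

end IsPowerfulPGroup

/-! ### Elements of order `p` in `℧[G,p]` -/

/-- The estimates on elements of small order that hold in a powerful `p`-group. The exponent of
`Ω_i(℧[G,p])` only needs the case `i = 1` of `commute`; the rest makes the induction on the order
of the group go through. -/
structure OrderEstimates (p : ℕ) (G : Type*) [Group G] : Prop where
  commute {i : ℕ} {x y : G} (hx : x ∈ ℧[G,p ^ i]) (hxp : x ^ p = 1) (hy : y ^ p ^ i = 1) :
    Commute x y
  commutator_pow {y : G} (hy : y ^ p = 1) (a : G) : ⁅y, a⁆ ^ p = 1
  mul_pow (hp2 : p ≠ 2) {x y : G} (hx : x ^ p = 1) (hy : y ^ p = 1) : (x * y) ^ p = 1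

/-- The induction hypothesis in the proof of `OrderEstimates p G`: the estimates hold in the
sections of `G` that the argument passes to. -/
structure SectionEstimates (p : ℕ) (G : Type*) [Group G] : Prop extends IsPowerfulPGroup p G where
  subgroup_estimates (b : G) : OrderEstimates p ↥(zpowers b ⊔ ℧[G,p])
  quotient_estimates : OrderEstimates p (G ⧸ omegaSubgroup p 1 ℧[G,p])

theorem orderEstimates_of_commute {p : ℕ} {G : Type*} [Group G] (h : ∀ x y : G, Commute x y) :
    OrderEstimates p G where
  commute _ _ _ := h _ _
  commutator_pow _ _ := by rw [commutatorElement_eq_one_iff_commute.2 (h _ _), one_pow]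
  mul_pow _ _ _ hx hy := by rw [(h _ _).mul_pow, hx, hy, one_mul]

namespace SectionEstimates

section Sections

variable {p : ℕ} {G : Type*} [Group G]

theorem commutatorElement_mem_omegaSubgroup (S : SectionEstimates p G) {x y : G} {i : ℕ}
    (hx : x ∈ ℧[G,p ^ i]) (hxp : x ^ p ∈ omegaSubgroup p 1 ℧[G,p])
    (hy : y ^ p ^ i ∈ omegaSubgroup p 1 ℧[G,p]) : ⁅x, y⁆ ∈ omegaSubgroup p 1 ℧[G,p] := by
  rw [← QuotientGroup.eq_one_iff] at hxp hy ⊢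
  have hx' := mem_map_of_mem (QuotientGroup.mk' (omegaSubgroup p 1 ℧[G,p])) hx
  rw [map_mk'_subgroupPow_top] at hx'
  exact commutatorElement_eq_one_iff_commute.2
    (S.quotient_estimates.commute (y := (y : G ⧸ _)) hx' hxp hy)

theorem commutator_pow_of_ne_two (S : SectionEstimates p G) (hp2 : p ≠ 2) {y : G} (hy : y ^ p = 1)
    (a : G) : ⁅y, a⁆ ^ p = 1 := by
  let T := zpowers y ⊔ ℧[G,p]
  have hyT : y ∈ T := mem_sup_left (mem_zpowers y)
  have hconj : a * y⁻¹ * a⁻¹ ∈ T := by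
    have hcomm : ⁅y, a⁆ ∈ T := mem_sup_right (S.commutatorElement_mem_subgroupPow_prime y a)
    have heq : a * y⁻¹ * a⁻¹ = y⁻¹ * ⁅y, a⁆ := by rw [commutatorElement_def]; group
    exact heq ▸ mul_mem (inv_mem hyT) hcomm
  have hconj_pow : (a * y⁻¹ * a⁻¹) ^ p = 1 := by
    rw [conj_pow, inv_pow, hy, inv_one, mul_one, mul_inv_cancel]
  have hmul : (y * (a * y⁻¹ * a⁻¹)) ^ p = 1 := congrArg Subtype.val <|
    (S.subgroup_estimates y).mul_pow hp2 (x := ⟨y, hyT⟩) (y := ⟨a * y⁻¹ * a⁻¹, hconj⟩)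
      (Subtype.ext hy) (Subtype.ext hconj_pow)
  rwa [← mul_assoc, ← mul_assoc] at hmul

end Sections

section Prime

variable {p : ℕ} [Fact p.Prime] {G : Type*} [Group G] [Finite G]

theorem commute_of_mem_subgroupPow_prime (S : SectionEstimates p G) {x y : G} {i : ℕ}
    (hx : x ∈ ℧[G,p ^ i]) (hxp : x ^ p = 1) (hy : y ∈ ℧[G,p]) (hyp : y ^ p ^ i = 1) :
    Commute x y := by
  obtain ⟨v, rfl⟩ := S.exists_pow_eq hx
  let b : ↥(zpowers v ⊔ ℧[G,p]) := ⟨v, mem_sup_left (mem_zpowers v)⟩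
  let z : ↥(zpowers v ⊔ ℧[G,p]) := ⟨y, mem_sup_right hy⟩
  have hbz : Commute (b ^ p ^ i) z := (S.subgroup_estimates v).commute
    (pow_mem_subgroupPow (mem_top b) _) (Subtype.ext hxp) (Subtype.ext hyp)
  exact congrArg Subtype.val hbz

theorem pow_eq_one_of_mem_omegaSubgroup_one (S : SectionEstimates p G) {x : G}
    (hx : x ∈ omegaSubgroup p 1 ℧[G,p]) : x ^ p = 1 :=
  pow_eq_one_of_mem_omegaSubgroup_one_of_commute (fun x hx y hy hxp hyp =>
    S.commute_of_mem_subgroupPow_prime (i := 1) (by rwa [pow_one]) hxp hy (by rwa [pow_one])) hx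

theorem commute_of_two_le (S : SectionEstimates p G) {x y : G} {i : ℕ} (hi : 2 ≤ i)
    (hx : x ∈ ℧[G,p ^ i]) (hxp : x ^ p = 1) (hy : y ^ p ^ i = 1) : Commute x y := by
  obtain ⟨j, rfl⟩ := Nat.exists_eq_add_of_le' hi
  obtain ⟨a, rfl⟩ := S.exists_pow_eq hx
  let u := a ^ p ^ (j + 1)
  have hux : u ^ p = a ^ p ^ (j + 2) := by rw [← pow_mul, ← pow_succ]
  have hu : u ∈ ℧[G,p ^ (j + 1)] := pow_mem_subgroupPow (mem_top a) _
  have hu_prime : u ∈ ℧[G,p] := subgroupPow_le_subgroupPow_prime p j.succ_ne_zero hu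
  have hu_pow : u ^ p ^ (j + 2) = 1 := by
    rw [pow_succ' p (j + 1), pow_mul, hux, pow_succ' p j, pow_mul, hxp, one_pow]
  rw [← hux] at hxp ⊢
  have hy_mem : y ^ p ^ (j + 1) ∈ omegaSubgroup p 1 ℧[G,p] :=
    mem_omegaSubgroup_one
      (subgroupPow_le_subgroupPow_prime p j.succ_ne_zero (pow_mem_subgroupPow (mem_top y) _))
      (by rw [← pow_mul, ← pow_succ, hy])
  have hw : ⁅u, y⁆ ^ p = 1 := S.pow_eq_one_of_mem_omegaSubgroup_one
    (S.commutatorElement_mem_omegaSubgroup hu (mem_omegaSubgroup_one (pow_mem hu_prime p) hxp)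
      hy_mem)
  exact commute_pow_of_commutator_pow_eq_one (S.commute_of_mem_subgroupPow_prime
    (S.commutatorElement_mem_succ hu y) hw hu_prime hu_pow).symm hw

end Prime

section Two

variable {G : Type*} [Group G] [Finite G]

theorem sq_mem_subgroupPow_succ (S : SectionEstimates 2 G) {c y : G} (hy : y ^ 2 = 1)
    (hc : c ∈ ℧[G,2 ^ 2]) (hcy : ⁅c, y⁆ = c ^ 2) (hc4 : c ^ 4 = 1) {n : ℕ}
    (hn : c ^ 2 ∈ ℧[G,2 ^ (n + 4)]) : c ^ 2 ∈ ℧[G,2 ^ (n + 5)] := by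
  obtain ⟨h, hh⟩ := S.exists_pow_eq hn
  let u := h ^ 2 ^ (n + 2)
  have hu2 : u ^ 2 = h ^ 2 ^ (n + 3) := by rw [← pow_mul, ← pow_succ]
  have hu4 : u ^ 4 = c ^ 2 := by rw [← hh, ← pow_mul, pow_add 2 n 4, pow_add 2 n 2]; congr 1; ring
  have hc2 : c ^ 2 ∈ omegaSubgroup 2 1 ℧[G,2] := mem_omegaSubgroup_one
    (pow_mem_subgroupPow (mem_top c) 2) (by rw [← pow_mul, hc4])
  have hcu_pow : ⁅c, u⁆ ^ 2 = 1 := S.pow_eq_one_of_mem_omegaSubgroup_one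
    (S.commutatorElement_mem_omegaSubgroup hc hc2 (hu4 ▸ hc2))
  have hcu : Commute ⁅c, u⁆ u := S.commute_of_two_le (i := 3) (by norm_num)
    (S.commutatorElement_mem_succ hc u) hcu_pow
    (by rw [show 2 ^ 3 = 4 * 2 from rfl, pow_mul, hu4, ← pow_mul, hc4])
  have hcu2 : Commute c (u ^ 2) := by
    rw [← commutatorElement_eq_one_iff_commute, commutatorElement_pow_right_of_commute hcu.symm,
      hcu_pow]
  -- `c` and `u ^ 2` agree up to the centralizer of `y`, and `u ^ 2` is deeper in the power series.
  have hs : Commute (c⁻¹ * u ^ 2) y := by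
    refine S.commute_of_two_le le_rfl (mul_mem (inv_mem hc) ?_) ?_ ?_
    · exact hu2 ▸ pow_mem_subgroupPow_of_le 2 h (by lia)
    · rw [hcu2.inv_left.mul_pow, ← pow_mul, hu4, inv_pow, inv_mul_cancel]
    · rw [pow_two, pow_mul, hy, one_pow]
  have hcomm : ⁅u ^ 2, y⁆ = c ^ 2 := by
    rw [← mul_inv_cancel_left c (u ^ 2), commutatorElement_mul_left_eq_conj_mul,
      commutatorElement_eq_one_iff_commute.2 hs, mul_one, mul_inv_cancel, one_mul, hcy]
  rw [← hcomm, hu2]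
  exact S.commutatorElement_mem_add_powerfulDepth (pow_mem_subgroupPow (mem_top h) _) y

theorem commutator_pow_two (S : SectionEstimates 2 G) {y : G} (hy : y ^ 2 = 1) (a : G) :
    ⁅y, a⁆ ^ 2 = 1 := by
  have hc : ⁅y, a⁆ ∈ ℧[G,2 ^ 2] := S.commutatorElement_mem y a
  have hcy : ⁅⁅y, a⁆, y⁆ = ⁅y, a⁆ ^ 2 := by
    rw [pow_two] at hy
    simp only [commutatorElement_def, mul_inv_rev, inv_inv, pow_two, mul_assoc,
      inv_eq_of_mul_eq_one_left hy, hy, mul_one]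
  have hc4 : ⁅y, a⁆ ^ 4 = 1 := by
    have hc2 : ⁅y, a⁆ ^ 2 ∈ omegaSubgroup 2 1 ℧[G,2] := by
      have hyN : (y : G ⧸ omegaSubgroup 2 1 ℧[G,2]) ^ 2 = 1 := congrArg QuotientGroup.mk hy
      exact (QuotientGroup.eq_one_iff _).1 (S.quotient_estimates.commutator_pow hyN a)
    rw [show 4 = 2 * 2 from rfl, pow_mul, S.pow_eq_one_of_mem_omegaSubgroup_one hc2]
  have hmem (n : ℕ) : ⁅y, a⁆ ^ 2 ∈ ℧[G,2 ^ (n + 4)] := by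
    induction n with
    | zero => exact hcy ▸ S.commutatorElement_mem_add_powerfulDepth hc y
    | succ n ih => exact S.sq_mem_subgroupPow_succ hy hc hcy hc4 ih
  exact S.eq_one_of_forall_mem fun n =>
    subgroupPow_le_of_dvd ⊤ (pow_dvd_pow 2 (Nat.le_add_right n 4)) (hmem n)

end Two

section Prime

variable {p : ℕ} [Fact p.Prime] {G : Type*} [Group G] [Finite G]

theorem commutator_pow (S : SectionEstimates p G) {y : G} (hy : y ^ p = 1) (a : G) :
    ⁅y, a⁆ ^ p = 1 := by
  obtain rfl | hp2 := eq_or_ne p 2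
  · exact S.commutator_pow_two hy a
  · exact S.commutator_pow_of_ne_two hp2 hy a

theorem commute_of_pow_prime (S : SectionEstimates p G) {x y : G} (hx : x ∈ ℧[G,p])
    (hxp : x ^ p = 1) (hy : y ^ p = 1) : Commute x y := by
  obtain ⟨a, rfl⟩ := S.exists_pow_prime_eq hx
  have ha : a ^ p ^ 2 = 1 := by rw [pow_two, pow_mul, hxp]
  have hcomm {d : G} (hd : d ∈ ℧[G,p ^ 2]) (hdp : d ^ p = 1) {b : G} (hb : b ^ p ^ 2 = 1) :
      Commute d b := S.commute_of_two_le le_rfl hd hdp hb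
  have hc := S.commutator_pow hy a
  have hc2 : ⁅y, a⁆ ^ p ^ 2 = 1 := by rw [pow_two, pow_mul, hc, one_pow]
  apply commute_pow_of_commutator_mul_pow_eq
  obtain rfl | hp2 := eq_or_ne p 2
  · rw [(hcomm (S.commutatorElement_mem y a) hc ha).mul_pow, hc, one_mul]
  · have hd : ⁅a, ⁅y, a⁆⁆ ∈ ℧[G,p ^ 2] := by
      rw [← commutatorElement_inv]
      exact inv_mem (S.commutatorElement_mem_succ (k := 1)
        ((pow_one p).symm ▸ S.commutatorElement_mem_subgroupPow_prime y a) a)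
    have hdp : ⁅a, ⁅y, a⁆⁆ ^ p = 1 := by
      rw [← commutatorElement_inv, inv_pow, S.commutator_pow hc, inv_one]
    rw [mul_pow_prime_of_commute_commutator hp2 (hcomm hd hdp hc2) (hcomm hd hdp ha) hdp, hc,
      one_mul]

theorem orderEstimates (S : SectionEstimates p G) : OrderEstimates p G where
  commute {i x y} hx hxp hy := by
    match i with
    | 0 =>
      rw [pow_zero, pow_one] at hy
      exact hy ▸ Commute.one_right x
    | 1 => exact S.commute_of_pow_prime (pow_one p ▸ hx) hxp (pow_one p ▸ hy)
    | i + 2 => exact S.commute_of_two_le (Nat.le_add_left 2 i) hx hxp hy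
  commutator_pow := S.commutator_pow
  mul_pow hp2 x y hx hy := by
    have hd := S.commutator_pow hy x
    have hcomm {z : G} (hz : z ^ p = 1) : Commute ⁅y, x⁆ z :=
      S.commute_of_pow_prime (S.commutatorElement_mem_subgroupPow_prime y x) hd hz
    rw [mul_pow_prime_of_commute_commutator hp2 (hcomm hx) (hcomm hy) hd, hx, hy, one_mul]

end Prime

end SectionEstimates

/-! ### The exponent of `Ω_i(℧[G,p])` -/

section Exponent

variable {p : ℕ} [Fact p.Prime] {G : Type*} [Group G] [Finite G]

namespace IsPowerfulPGroup

theorem orderEstimates (hG : IsPowerfulPGroup p G) : OrderEstimates p G := by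
  induction hn : Nat.card G using Nat.strong_induction_on generalizing G with
  | _ n ih =>
  by_cases hab : ∀ a b : G, Commute a b
  · exact orderEstimates_of_commute hab
  refine SectionEstimates.orderEstimates ⟨hG, fun b => ?_, ?_⟩
  · have hT : zpowers b ⊔ ℧[G,p] ≠ ⊤ :=
      mt (commute_of_zpowers_sup_subgroupPow_eq_top hG.isPGroup) hab
    exact ih _ (hn ▸ card_lt_card_of_ne_top hT) (hG.zpowers_sup b) rfl
  · have hne : ℧[G,p] ≠ ⊥ := fun hbot => hab fun a b => commutatorElement_eq_one_iff_commute.1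
      (mem_bot.1 (hbot ▸ hG.commutatorElement_mem_subgroupPow_prime a b))
    have hN := (one_lt_card_iff_ne_bot _).2
      (omegaSubgroup_one_ne_bot (hG.isPGroup.to_subgroup _) hne)
    refine ih _ ?_ (hG.quotient _) rfl
    rw [← hn, card_eq_card_quotient_mul_card_subgroup (omegaSubgroup p 1 ℧[G,p])]
    exact lt_mul_of_one_lt_right Nat.card_pos hN

theorem pow_eq_one_of_mem_omegaSubgroup (hG : IsPowerfulPGroup p G) (i : ℕ) {x : G}
    (hx : x ∈ omegaSubgroup p i ℧[G,p]) : x ^ p ^ i = 1 := by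
  induction i generalizing x with
  | zero =>
    rw [omegaSubgroup_zero, mem_bot] at hx
    rw [hx, one_pow]
  | succ i ih =>
    let N := omegaSubgroup p i ℧[G,p]
    have hle : omegaSubgroup p (i + 1) ℧[G,p] ≤
        (omegaSubgroup p 1 ℧[G ⧸ N,p]).comap (QuotientGroup.mk' N) := by
      refine (closure_le _).2 fun z ⟨hz, hzp⟩ => mem_omegaSubgroup_one
        (map_mk'_subgroupPow_top N p ▸ mem_map_of_mem _ hz) ?_
      rw [pow_succ', pow_mul] at hzp
      exact (QuotientGroup.eq_one_iff (z ^ p)).2 (subset_closure ⟨pow_mem hz p, hzp⟩)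
    have hxN : QuotientGroup.mk' N x ^ p = 1 :=
      pow_eq_one_of_mem_omegaSubgroup_one_of_commute (fun x hx y _ hxp hyp =>
        (hG.quotient N).orderEstimates.commute (i := 1) (by rwa [pow_one]) hxp (by rwa [pow_one]))
        (hle hx)
    rw [pow_succ', pow_mul]
    exact ih ((QuotientGroup.eq_one_iff (x ^ p)).1 hxN)

end IsPowerfulPGroup

end Exponent

theorem omega_statement_3 (p : ℕ) (hp : p.Prime) (G : Type*) [Group G] [Finite G]
    (hG : IsPGroup p G) (hpow : IsPowerful p G) (i j k : ℕ) (hji : j ≤ i) (hk : 1 ≤ k) :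
    ∀ x ∈ subgroupPow (omegaSubgroup p i (subgroupPow (⊤ : Subgroup G) (p ^ k))) (p ^ j),
      x ^ p ^ (i - j) = 1 := by
  have := Fact.mk hp
  have hG' : IsPowerfulPGroup p G := ⟨hG, hpow⟩
  have hle : omegaSubgroup p i ℧[G,p ^ k] ≤ omegaSubgroup p i ℧[G,p] :=
    omegaSubgroup_mono p i (subgroupPow_le_subgroupPow_prime p (Nat.one_le_iff_ne_zero.1 hk))
  intro x hx
  refine hG'.pow_eq_one_of_mem_omegaSubgroup (i - j) (subgroupPow_le.2 (fun y hy => ?_) hx)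
  have hy_mem : y ^ p ^ j ∈ ℧[G,p] := pow_mem (omegaSubgroup_le p i _ (hle hy)) _
  have hy_pow : (y ^ p ^ j) ^ p ^ (i - j) = 1 := by
    rw [← pow_mul, ← pow_add, Nat.add_sub_cancel' hji]
    exact hG'.pow_eq_one_of_mem_omegaSubgroup i (hle hy)
  exact subset_closure ⟨hy_mem, hy_pow⟩
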